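/- arXiv:2305.04907 — 2 statements merged into one kernel-verified Lean document; each statement's English description precedes it below -/
import Mathlib

section
/- If S is a blocking semioval with exactly 25 points in PG(2,11), then every line of PG(2,11) meets S in at most 6 points. -/
instance : Fact (Nat.Prime 11) := ⟨by norm_num⟩

/-- The points of `PG(2,11)`: the projectivization of `(ZMod 11)^3`. -/
abbrev PGPoint : Type := Projectivization (ZMod 11) (Fin 3 → ZMod 11)

/-- The lines of `PG(2,11)`: the 2-dimensional subspaces of `(ZMod 11)^3`. -/
abbrev PGLine : Type :=
  {W : Submodule (ZMod 11) (Fin 3 → ZMod 11) // Module.finrank (ZMod 11) W = 2}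

/-- Incidence: a point lies on a line when its representing 1-dimensional
subspace is contained in the line's 2-dimensional subspace. -/
def PGmem (P : PGPoint) (L : PGLine) : Prop := Projectivization.submodule P ≤ L.val

/-- The set of points lying on a line. -/
def linePts (L : PGLine) : Set PGPoint := {P | PGmem P L}

/-- The set of points of `S` lying on the line `L`. -/
def secantPts (S : Set PGPoint) (L : PGLine) : Set PGPoint := {P ∈ S | PGmem P L}

/-- A line is a `k`-secant to `S` if it meets `S` in exactly `k` points. -/
def IsSecant (S : Set PGPoint) (k : ℕ) (L : PGLine) : Prop := (secantPts S L).ncard = k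

/-- A tangent line to `S` is a 1-secant. -/
def IsTangent (S : Set PGPoint) (L : PGLine) : Prop := IsSecant S 1 L

/-- A blocking set: every line meets `S`, but `S` contains no line. -/
def IsBlockingSet (S : Set PGPoint) : Prop :=
  (∀ L : PGLine, (secantPts S L).Nonempty) ∧ ∀ L : PGLine, ¬ linePts L ⊆ S

/-- A semioval: every point of `S` lies on exactly one tangent line to `S`. -/
def IsSemioval (S : Set PGPoint) : Prop :=
  ∀ P ∈ S, ∃! L : PGLine, PGmem P L ∧ IsTangent S L

/-- A blocking semioval is both a blocking set and a semioval. -/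
def IsBlockingSemioval (S : Set PGPoint) : Prop := IsBlockingSet S ∧ IsSemioval S

/-!
Let `S` be a blocking set of `PG(2,q)` with at most one tangent at each point, `l` a line and
`k = |S ∩ l|`.

Jamison's theorem says that `2 (q - 1)` points off `l` cannot meet all the other lines. The lines
missed by `S \ l` are tangents at distinct points of `S ∩ l`, so any two of them meet off `l`, and
`⌈k / 2⌉` points off `l` suffice to hit them. Hence `2 (q - 1) < |S \ l| + ⌈k / 2⌉`.

Of the `q` lines other than `l` through a point of `l \ S`, those that are not tangent meet `S \ l`
at least twice, so at least `2 q - |S \ l|` of them are tangent. Distinct tangents obtained in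
this way touch `S` at distinct points of `S \ l`, so
`(q + 1 - k) (2 q - |S \ l|) ≤ |S \ l|`.

If `|S| ≤ 2 q + 3` then the first inequality gives `k ≤ 9`, and for `q ≥ 11` the second one excludes
`k = 7, 8, 9`.
-/

open Configuration Finset
open scoped LinearAlgebra.Projectivization

theorem exists_forall_exists_rel_of_common {α β : Type*} {r : α → β → Prop} (X : Finset α)
    (hr : ∀ x ∈ X, ∀ y ∈ X, ∃ b, r x b ∧ r y b) :
    ∃ B : Finset β, #B ≤ (#X + 1) / 2 ∧ ∀ x ∈ X, ∃ b ∈ B, r x b := by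
  classical
  induction X using Finset.strongInduction with
  | H X ih =>
    obtain rfl | ⟨x, hx⟩ := X.eq_empty_or_nonempty
    · exact ⟨∅, by simp⟩
    -- The elements of `X` are served in pairs `x`, `y`, and a last odd one is paired with itself.
    obtain ⟨y, hy, hcard⟩ : ∃ y ∈ X, (#((X.erase x).erase y) + 1) / 2 + 1 ≤ (#X + 1) / 2 := by
      have hXx := card_erase_add_one hx
      obtain h | ⟨y, hy⟩ := (X.erase x).eq_empty_or_nonempty
      · exact ⟨x, hx, by simp [← hXx, h]⟩
      · have := card_erase_add_one hy
        exact ⟨y, mem_of_mem_erase hy, by omega⟩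
    have hsub : (X.erase x).erase y ⊆ X := (erase_subset _ _).trans (erase_subset _ _)
    obtain ⟨B, hBcard, hB⟩ := ih _ ((erase_subset _ _).trans_ssubset (erase_ssubset hx))
      fun u hu v hv => hr u (hsub hu) v (hsub hv)
    obtain ⟨b, hxb, hyb⟩ := hr x hx y hy
    refine ⟨insert b B, (card_insert_le b B).trans (by omega), fun z hz => ?_⟩
    by_cases hzx : z = x
    · exact ⟨b, mem_insert_self b B, hzx ▸ hxb⟩
    by_cases hzy : z = y
    · exact ⟨b, mem_insert_self b B, hzy ▸ hyb⟩
    obtain ⟨c, hc, hzc⟩ := hB z (mem_erase.2 ⟨hzy, mem_erase.2 ⟨hzx, hz⟩⟩)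
    exact ⟨c, mem_insert_of_mem hc, hzc⟩

section Nondegenerate

variable {P L : Type*} [Membership P L] [Nondegenerate P L]
  [∀ (p : P) (l : L), Decidable (p ∈ l)]

theorem card_filter_mem_eq_one_of_subset {S : Finset P} {l m : L} (hml : m ≠ l)
    (hmeet : ∃ p ∈ S, p ∈ m) (hsub : ∀ p ∈ S, p ∈ m → p ∈ l) : #{p ∈ S | p ∈ m} = 1 := by
  obtain ⟨p, hpS, hpm⟩ := hmeet
  refine card_eq_one.2 ⟨p, eq_singleton_iff_unique_mem.2 ⟨mem_filter.2 ⟨hpS, hpm⟩, fun r hr => ?_⟩⟩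
  obtain ⟨hrS, hrm⟩ := mem_filter.1 hr
  exact (Nondegenerate.eq_or_eq hrm hpm (hsub r hrS hrm) (hsub p hpS hpm)).resolve_right hml

variable [Fintype L] [DecidableEq L]

theorem sum_card_filter_mem_le {S : Finset P} {Q : P} {l : L} (hQl : Q ∈ l) (hQS : Q ∉ S) :
    ∑ m : L with Q ∈ m ∧ m ≠ l, #{p ∈ S | p ∈ m} ≤ #{p ∈ S | p ∉ l} := by
  have hjoin {p : P} {m m' : L} (hp : p ∈ S) (hQm : Q ∈ m) (hpm : p ∈ m) (hQm' : Q ∈ m')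
      (hpm' : p ∈ m') : m = m' :=
    (Nondegenerate.eq_or_eq hQm hpm hQm' hpm').resolve_left fun h => hQS (h ▸ hp)
  rw [← card_sigma]
  refine card_le_card_of_injOn Sigma.snd ?_ ?_
  · rintro ⟨m, p⟩ hx
    simp only [coe_sigma, Set.mem_sigma_iff, mem_coe, mem_filter, mem_univ, true_and] at hx ⊢
    obtain ⟨⟨hQm, hml⟩, hpS, hpm⟩ := hx
    exact ⟨hpS, fun hpl => hml (hjoin hpS hQm hpm hQl hpl)⟩
  · rintro ⟨m, p⟩ hx ⟨m', p'⟩ hx' (rfl : p = p')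
    simp only [coe_sigma, Set.mem_sigma_iff, mem_coe, mem_filter, mem_univ, true_and] at hx hx'
    rw [hjoin hx.2.1 hx.1.1 hx.2.2 hx'.1.1 hx'.2.2]

theorem sum_card_tangents_le [Fintype P] [DecidableEq P] {S : Finset P}
    (htangent : ∀ p ∈ S, {m : L | p ∈ m ∧ #{r ∈ S | r ∈ m} = 1}.Subsingleton) (l : L) :
    ∑ Q : P with Q ∈ l ∧ Q ∉ S, #{m : L | (Q ∈ m ∧ m ≠ l) ∧ #{p ∈ S | p ∈ m} = 1} ≤
      #{p ∈ S | p ∉ l} := by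
  rw [← card_sigma]
  refine card_le_card_of_forall_subsingleton (fun x p => p ∈ x.2) ?_ ?_
  · rintro ⟨Q, m⟩ hx
    simp only [mem_sigma, mem_filter, mem_univ, true_and] at hx
    obtain ⟨⟨hQl, hQS⟩, ⟨hQm, hml⟩, hm⟩ := hx
    obtain ⟨p, hp⟩ := card_pos.1 (hm ▸ one_pos)
    obtain ⟨hpS, hpm⟩ := mem_filter.1 hp
    refine ⟨p, mem_filter.2 ⟨hpS, fun hpl => ?_⟩, hpm⟩
    obtain rfl := (Nondegenerate.eq_or_eq hQm hpm hQl hpl).resolve_right hml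
    exact hQS hpS
  · rintro p hp ⟨Q, m⟩ ⟨hx, hpm⟩ ⟨Q', m'⟩ ⟨hx', hpm'⟩
    simp only [mem_sigma, mem_filter, mem_univ, true_and] at hp hx hx' hpm hpm'
    obtain rfl : m = m' := htangent p hp.1 ⟨hpm, hx.2.2⟩ ⟨hpm', hx'.2.2⟩
    obtain rfl : Q = Q' :=
      (Nondegenerate.eq_or_eq hx.2.1.1 hx'.2.1.1 hx.1.1 hx'.1.1).resolve_right hx.2.1.2
    rfl

end Nondegenerate

section ProjectivePlane

variable {P L : Type*} [Membership P L] [ProjectivePlane P L]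

theorem exists_mem_notMem_of_ne [Finite P] [Finite L] {l m : L} (hml : m ≠ l) :
    ∃ p ∈ m, p ∉ l := by
  have hcard := ProjectivePlane.two_lt_pointCount P m
  have : Nontrivial {p : P // p ∈ m} :=
    Finite.one_lt_card_iff_nontrivial.1 (one_lt_two.trans hcard)
  obtain ⟨⟨p, hp⟩, ⟨p', hp'⟩, hne⟩ := exists_pair_ne {p : P // p ∈ m}
  by_contra! hsub
  exact (Nondegenerate.eq_or_eq hp hp' (hsub p hp) (hsub p' hp')).elim
    (fun h => hne (Subtype.ext h)) hml

theorem exists_common_notMem [Finite P] [Finite L] {l m m' : L} (hml : m ≠ l)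
    (heq : ∀ p ∈ l, p ∈ m → p ∈ m' → m = m') :
    ∃ b : P, (b ∈ m ∧ b ∉ l) ∧ b ∈ m' ∧ b ∉ l := by
  obtain rfl | hmm' := eq_or_ne m m'
  · obtain ⟨b, hbm, hbl⟩ := exists_mem_notMem_of_ne (P := P) hml
    exact ⟨b, ⟨hbm, hbl⟩, hbm, hbl⟩
  · obtain ⟨hbm, hbm'⟩ := HasPoints.mkPoint_ax (P := P) hmm'
    have hbl : HasPoints.mkPoint hmm' ∉ l := fun hbl => hmm' (heq _ hbl hbm hbm')
    exact ⟨_, ⟨hbm, hbl⟩, hbm', hbl⟩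

variable [∀ (p : P) (l : L), Decidable (p ∈ l)]

theorem card_filter_mem_add_card_filter_mem_and_notMem [Fintype P] [DecidableEq P] [Finite L]
    (S : Finset P) (l : L) :
    #{p ∈ S | p ∈ l} + #{p | p ∈ l ∧ p ∉ S} = ProjectivePlane.order P L + 1 := by
  rw [← ProjectivePlane.pointCount_eq P l, pointCount, Nat.card_eq_fintype_card,
    Fintype.card_subtype, ← card_filter_add_card_filter_not (s := {p | p ∈ l}) (· ∈ S),
    filter_filter, filter_filter]
  congr 2
  ext p
  simp [and_comm]

theorem card_filter_mem_and_ne [Finite P] [Fintype L] [DecidableEq L] {Q : P} {l : L} (hQ : Q ∈ l) :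
    #{m : L | Q ∈ m ∧ m ≠ l} = ProjectivePlane.order P L := by
  have hpencil := ProjectivePlane.lineCount_eq L Q
  rw [lineCount, Nat.card_eq_fintype_card, Fintype.card_subtype] at hpencil
  rw [← filter_filter, filter_ne', card_erase_of_mem (by simpa using hQ), hpencil,
    Nat.add_sub_cancel]

theorem two_mul_order_le_card_add_card_tangents [Finite P] [Fintype L] [DecidableEq L]
    {S : Finset P} (hblock : ∀ m : L, ∃ p ∈ S, p ∈ m) {Q : P} {l : L} (hQl : Q ∈ l) (hQS : Q ∉ S) :
    2 * ProjectivePlane.order P L ≤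
      #{p ∈ S | p ∉ l} + #{m : L | (Q ∈ m ∧ m ≠ l) ∧ #{p ∈ S | p ∈ m} = 1} := by
  have htwo (m : L) : 2 ≤ #{p ∈ S | p ∈ m} + if #{p ∈ S | p ∈ m} = 1 then 1 else 0 := by
    obtain ⟨p, hpS, hpm⟩ := hblock m
    have hpos : 0 < #{p ∈ S | p ∈ m} := card_pos.2 ⟨p, mem_filter.2 ⟨hpS, hpm⟩⟩
    split_ifs <;> omega
  calc 2 * ProjectivePlane.order P L
      = ∑ m : L with Q ∈ m ∧ m ≠ l, 2 := by
        rw [sum_const, card_filter_mem_and_ne hQl, smul_eq_mul, mul_comm]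
    _ ≤ ∑ m : L with Q ∈ m ∧ m ≠ l,
          (#{p ∈ S | p ∈ m} + if #{p ∈ S | p ∈ m} = 1 then 1 else 0) :=
        sum_le_sum fun m _ => htwo m
    _ ≤ _ := by
        rw [sum_add_distrib, ← card_filter, filter_filter]
        exact Nat.add_le_add_right (sum_card_filter_mem_le hQl hQS) _

theorem card_mul_two_mul_order_le_mul_card [Fintype P] [DecidableEq P] [Finite L] {S : Finset P}
    (hblock : ∀ m : L, ∃ p ∈ S, p ∈ m)
    (htangent : ∀ p ∈ S, {m : L | p ∈ m ∧ #{r ∈ S | r ∈ m} = 1}.Subsingleton) (l : L) :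
    #{Q | Q ∈ l ∧ Q ∉ S} * (2 * ProjectivePlane.order P L) ≤
      (#{Q | Q ∈ l ∧ Q ∉ S} + 1) * #{p ∈ S | p ∉ l} := by
  classical
  have := Fintype.ofFinite L
  calc #{Q | Q ∈ l ∧ Q ∉ S} * (2 * ProjectivePlane.order P L)
      ≤ ∑ Q : P with Q ∈ l ∧ Q ∉ S,
          (#{p ∈ S | p ∉ l} + #{m : L | (Q ∈ m ∧ m ≠ l) ∧ #{p ∈ S | p ∈ m} = 1}) := by
        rw [← smul_eq_mul]
        refine card_nsmul_le_sum _ _ _ fun Q hQ => ?_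
        obtain ⟨hQl, hQS⟩ := (mem_filter.1 hQ).2
        exact two_mul_order_le_card_add_card_tangents hblock hQl hQS
    _ ≤ (#{Q | Q ∈ l ∧ Q ∉ S} + 1) * #{p ∈ S | p ∉ l} := by
        rw [sum_add_distrib, sum_const, smul_eq_mul, add_one_mul]
        exact Nat.add_le_add_left (sum_card_tangents_le htangent l) _

theorem exists_card_le_forall_exists_mem_of_subset [Finite P] [Finite L] {S : Finset P}
    (hblock : ∀ m : L, ∃ p ∈ S, p ∈ m)
    (htangent : ∀ p ∈ S, {m : L | p ∈ m ∧ #{r ∈ S | r ∈ m} = 1}.Subsingleton) (l : L) :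
    ∃ B : Finset P, #B ≤ (#{p ∈ S | p ∈ l} + 1) / 2 ∧
      ∀ m : L, m ≠ l → (∀ p ∈ S, p ∈ m → p ∈ l) → ∃ b ∈ B, b ∈ m ∧ b ∉ l := by
  classical
  have := Fintype.ofFinite L
  let M : Finset L := {m | m ≠ l ∧ ∀ p ∈ S, p ∈ m → p ∈ l}
  have hM {m : L} : m ∈ M ↔ m ≠ l ∧ ∀ p ∈ S, p ∈ m → p ∈ l := by simp [M]
  have heq : ∀ m ∈ M, ∀ m' ∈ M, ∀ p ∈ S, p ∈ m → p ∈ m' → m = m' := by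
    intro m hm m' hm' p hp hpm hpm'
    rw [hM] at hm hm'
    exact htangent p hp ⟨hpm, card_filter_mem_eq_one_of_subset hm.1 (hblock m) hm.2⟩
      ⟨hpm', card_filter_mem_eq_one_of_subset hm'.1 (hblock m') hm'.2⟩
  have hMcard : #M ≤ #{p ∈ S | p ∈ l} := by
    refine card_le_card_of_forall_subsingleton (fun m p => p ∈ m) (fun m hm => ?_) ?_
    · obtain ⟨p, hpS, hpm⟩ := hblock m
      exact ⟨p, mem_filter.2 ⟨hpS, (hM.1 hm).2 p hpS hpm⟩, hpm⟩
    · exact fun p hp m hm m' hm' => heq m hm.1 m' hm'.1 p (mem_filter.1 hp).1 hm.2 hm'.2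
  have hcommon : ∀ m ∈ M, ∀ m' ∈ M, ∃ b : P, (b ∈ m ∧ b ∉ l) ∧ b ∈ m' ∧ b ∉ l := by
    intro m hm m' hm'
    refine exists_common_notMem (hM.1 hm).1 fun p hpl hpm hpm' => ?_
    obtain ⟨r, hrS, hrm⟩ := hblock m
    obtain rfl := (Nondegenerate.eq_or_eq hpm hrm hpl ((hM.1 hm).2 r hrS hrm)).resolve_right
      (hM.1 hm).1
    exact heq m hm m' hm' p hrS hpm hpm'
  obtain ⟨B, hBcard, hB⟩ := exists_forall_exists_rel_of_common M hcommon
  exact ⟨B, hBcard.trans (by omega), fun m hml hm => hB m (hM.2 ⟨hml, hm⟩)⟩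

theorem exists_affine_blocking_card_le [Finite P] [Finite L] {S : Finset P}
    (hblock : ∀ m : L, ∃ p ∈ S, p ∈ m)
    (htangent : ∀ p ∈ S, {m : L | p ∈ m ∧ #{r ∈ S | r ∈ m} = 1}.Subsingleton) (l : L) :
    ∃ A : Finset P, (∀ p ∈ A, p ∉ l) ∧ (∀ m : L, m ≠ l → ∃ p ∈ A, p ∈ m) ∧
      #A ≤ #{p ∈ S | p ∉ l} + (#{p ∈ S | p ∈ l} + 1) / 2 := by
  classical
  obtain ⟨B, hBcard, hB⟩ := exists_card_le_forall_exists_mem_of_subset hblock htangent l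
  refine ⟨{p ∈ S ∪ B | p ∉ l}, fun p hp => (mem_filter.1 hp).2, fun m hml => ?_, ?_⟩
  · by_cases hm : ∀ p ∈ S, p ∈ m → p ∈ l
    · obtain ⟨b, hbB, hbm, hbl⟩ := hB m hml hm
      exact ⟨b, mem_filter.2 ⟨mem_union_right _ hbB, hbl⟩, hbm⟩
    · push Not at hm
      obtain ⟨p, hpS, hpm, hpl⟩ := hm
      exact ⟨p, mem_filter.2 ⟨mem_union_left _ hpS, hpl⟩, hpm⟩
  · rw [filter_union]
    have := card_filter_le B (· ∉ l)
    have := card_union_le {p ∈ S | p ∉ l} {p ∈ B | p ∉ l}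
    omega

end ProjectivePlane

section Jamison

variable {K σ : Type*} [Field K] [Fintype K] [Fintype σ]

/-- **Jamison's theorem** on covering all points but one by hyperplanes. The product of the
equations of the hyperplanes is nonzero at a single point of `K ^ n`, so the sum of its values is
nonzero, whereas for a polynomial of degree less than `n * (q - 1)` this sum vanishes. -/
theorem card_mul_card_sub_one_le_of_dotProduct_cover {ι : Type*} {s : Finset ι} {a : ι → σ → K}
    {b : ι → K} {x₀ : σ → K} (hx₀ : ∀ i ∈ s, a i ⬝ᵥ x₀ ≠ b i)
    (hcover : ∀ x ≠ x₀, ∃ i ∈ s, a i ⬝ᵥ x = b i) :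
    Fintype.card σ * (Fintype.card K - 1) ≤ #s := by
  classical
  let f (i : ι) : MvPolynomial σ K := ∑ j, .C (a i j) * .X j - .C (b i)
  have heval (x : σ → K) : (∏ i ∈ s, f i).eval x = ∏ i ∈ s, (a i ⬝ᵥ x - b i) := by
    simp [f, dotProduct, map_prod]
  have hf (i : ι) : (f i).totalDegree ≤ 1 := by
    refine (MvPolynomial.totalDegree_sub_C_le _ _).trans ?_
    refine MvPolynomial.totalDegree_finsetSum_le fun j _ => ?_
    exact (MvPolynomial.totalDegree_mul _ _).trans (by simp)
  have hdeg : (∏ i ∈ s, f i).totalDegree ≤ #s :=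
    (MvPolynomial.totalDegree_finsetProd _ _).trans <|
      (sum_le_card_nsmul s _ 1 fun i _ => hf i).trans_eq (mul_one _)
  by_contra! hlt
  have hsum := MvPolynomial.sum_eval_eq_zero _ (hdeg.trans_lt (mul_comm _ (Fintype.card σ) ▸ hlt))
  rw [Fintype.sum_eq_single x₀ fun x hx => ?_, heval, prod_eq_zero_iff] at hsum
  · obtain ⟨i, hi, h⟩ := hsum
    exact hx₀ i hi (sub_eq_zero.1 h)
  · obtain ⟨i, hi, h⟩ := hcover x hx
    rw [heval, prod_eq_zero hi (sub_eq_zero.2 h)]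

theorem card_filter_ne_and_ne {α : Type*} [Fintype α] [DecidableEq α] {a b : α} (hab : a ≠ b) :
    #{c | c ≠ a ∧ c ≠ b} = Fintype.card α - 2 := by
  rw [← filter_filter, filter_ne', filter_ne', card_erase_of_mem (by simpa using hab.symm),
    card_erase_of_mem (mem_univ a), card_univ, Nat.sub_sub]

theorem orthogonal_mk_iff_rep_dotProduct {K σ : Type*} [Field K] [Fintype σ]
    (a : ℙ K (σ → K)) {x : σ → K} (hx : x ≠ 0) :
    a.orthogonal (.mk K x hx) ↔ a.rep ⬝ᵥ x = 0 := by
  conv_lhs => rw [← a.mk_rep]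
  exact Projectivization.orthogonal_mk _ _

/-- Jamison's theorem dualized: the points of `A` stand for hyperplanes through the origin. -/
theorem card_sub_one_mul_card_sub_one_lt_of_orthogonal_cover {A : Finset (ℙ K (σ → K))}
    {l : ℙ K (σ → K)} (hA : A.Nonempty) (hl : ∀ a ∈ A, ¬ a.orthogonal l)
    (hcover : ∀ k ≠ l, ∃ a ∈ A, a.orthogonal k) :
    (Fintype.card σ - 1) * (Fintype.card K - 1) < #A := by
  classical
  obtain ⟨a₀, ha₀⟩ := hA
  have hrep : ∀ a ∈ A, a.rep ⬝ᵥ l.rep ≠ 0 := fun a ha h =>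
    hl a ha (by simpa using (orthogonal_mk_iff_rep_dotProduct a l.rep_nonzero).2 h)
  -- The hyperplanes `a.rep ⬝ᵥ x = 0` miss only the multiples of `l.rep`; the hyperplanes
  -- `a₀.rep ⬝ᵥ x = c` with `c ∈ C` cover all of these but `l.rep` itself.
  let C : Finset K := {c | c ≠ 0 ∧ c ≠ a₀.rep ⬝ᵥ l.rep}
  have hC : #C = Fintype.card K - 2 := card_filter_ne_and_ne (hrep a₀ ha₀).symm
  have hjamison := card_mul_card_sub_one_le_of_dotProduct_cover (s := A.disjSum C)
    (a := Sum.elim Projectivization.rep fun _ => a₀.rep) (b := Sum.elim 0 id) (x₀ := l.rep) ?_ ?_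
  · rw [card_disjSum, hC] at hjamison
    have := Fintype.one_lt_card (α := K)
    have := card_pos.2 ⟨a₀, ha₀⟩
    rw [Nat.sub_one_mul]
    omega
  · rintro (a | c) hi
    · exact hrep a (inl_mem_disjSum.1 hi)
    · exact (mem_filter.1 (inr_mem_disjSum.1 hi)).2.2.symm
  · intro x hx
    by_cases hxl : ∃ c : K, c • l.rep = x
    · obtain ⟨c, rfl⟩ := hxl
      obtain rfl | hc := eq_or_ne c 0
      · exact ⟨.inl a₀, inl_mem_disjSum.2 ha₀, by simp⟩
      · refine ⟨.inr (c * (a₀.rep ⬝ᵥ l.rep)),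
          inr_mem_disjSum.2 (mem_filter.2 ⟨mem_univ _, ?_, ?_⟩), by simp⟩
        · exact mul_ne_zero hc (hrep a₀ ha₀)
        · intro h
          exact hx (by simp [(mul_eq_right₀ (hrep a₀ ha₀)).1 h])
    · have hx0 : x ≠ 0 := by
        rintro rfl
        exact hxl ⟨0, zero_smul _ _⟩
      obtain ⟨a, ha, hax⟩ := hcover (.mk K x hx0) fun h => hxl <| by
        rw [← l.mk_rep, Projectivization.mk_eq_mk_iff'] at h
        exact h
      exact ⟨.inl a, inl_mem_disjSum.2 ha, (orthogonal_mk_iff_rep_dotProduct a hx0).1 hax⟩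

end Jamison

section Polarity

open LinearMap (BilinForm)
open LinearMap.BilinForm

variable {K σ : Type*} [Field K] [Fintype σ]

theorem isRefl_dotProductBilin : IsRefl (dotProductBilin K K : BilinForm K (σ → K)) :=
  fun x y h => (dotProduct_comm y x).trans h

theorem nondegenerate_dotProductBilin :
    Nondegenerate (dotProductBilin K K : BilinForm K (σ → K)) :=
  ⟨fun x hx => dotProduct_eq_zero x hx,
    fun y hy => dotProduct_eq_zero y fun x => (dotProduct_comm y x).trans (hy x)⟩

theorem orthogonal_orthogonal_dotProductBilin (W : Submodule K (σ → K)) :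
    orthogonal (dotProductBilin K K) (orthogonal (dotProductBilin K K) W) = W :=
  orthogonal_orthogonal nondegenerate_dotProductBilin isRefl_dotProductBilin W

theorem finrank_orthogonal_dotProductBilin (W : Submodule K (σ → K)) :
    Module.finrank K (orthogonal (dotProductBilin K K) W) =
      Fintype.card σ - Module.finrank K W := by
  rw [finrank_orthogonal nondegenerate_dotProductBilin, Module.finrank_fintype_fun_eq_card]

/-- The polar hyperplane of a point of projective space with respect to the dot product. It
translates between lines as subspaces and Mathlib's projective plane `ℙ K (Fin 3 → K)`, where points
also stand for lines and incidence is orthogonality. -/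
def polarHyperplane (R : ℙ K (σ → K)) : Submodule K (σ → K) :=
  orthogonal (dotProductBilin K K) R.submodule

theorem submodule_le_polarHyperplane {p R : ℙ K (σ → K)} :
    p.submodule ≤ polarHyperplane R ↔ p.orthogonal R := by
  induction p with | h v hv
  induction R with | h w hw
  rw [polarHyperplane, Projectivization.submodule_mk, Projectivization.submodule_mk,
    Submodule.span_singleton_le_iff_mem, mem_orthogonal_iff, Projectivization.orthogonal_mk,
    dotProduct_comm v w]
  refine ⟨fun h => h w (Submodule.mem_span_singleton_self w), fun h x hx => ?_⟩
  obtain ⟨c, rfl⟩ := Submodule.mem_span_singleton.1 hx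
  exact (smul_dotProduct c w v).trans (by rw [h, smul_zero])

theorem finrank_polarHyperplane (R : ℙ K (σ → K)) :
    Module.finrank K (polarHyperplane R) = Fintype.card σ - 1 := by
  rw [polarHyperplane, finrank_orthogonal_dotProductBilin, R.finrank_submodule]

theorem polarHyperplane_injective :
    Function.Injective (polarHyperplane : ℙ K (σ → K) → Submodule K (σ → K)) := by
  intro R R' h
  apply Projectivization.submodule_injective
  rw [← orthogonal_orthogonal_dotProductBilin R.submodule,
    ← orthogonal_orthogonal_dotProductBilin R'.submodule]
  exact congrArg (orthogonal (dotProductBilin K K)) h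

theorem exists_polarHyperplane_eq {W : Submodule K (σ → K)}
    (hW : Module.finrank K W + 1 = Fintype.card σ) : ∃ R, polarHyperplane R = W := by
  have h : Module.finrank K (orthogonal (dotProductBilin K K) W) = 1 := by
    rw [finrank_orthogonal_dotProductBilin]
    omega
  refine ⟨.mk'' _ h, ?_⟩
  rw [polarHyperplane, Projectivization.submodule_mk'', orthogonal_orthogonal_dotProductBilin]

end Polarity

section Desarguesian

variable {K : Type*} [Field K]

theorem order_eq_card [Finite K] [DecidableEq K] :
    ProjectivePlane.order (ℙ K (Fin 3 → K)) (ℙ K (Fin 3 → K)) = Nat.card K := by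
  have := Fintype.ofFinite (ℙ K (Fin 3 → K))
  have h := ProjectivePlane.card_points (ℙ K (Fin 3 → K)) (ℙ K (Fin 3 → K))
  rw [← Nat.card_eq_fintype_card,
    Projectivization.card_of_finrank (n := 3) K (Fin 3 → K) (by simp)] at h
  simp only [sum_range_succ, sum_range_zero] at h
  nlinarith

open scoped Classical in
theorem two_mul_card_sub_one_lt_card_filter_add [Finite K] {S : Finset (ℙ K (Fin 3 → K))}
    (hblock : ∀ m : ℙ K (Fin 3 → K), ∃ p ∈ S, p ∈ m)
    (htangent : ∀ p ∈ S,
      {m : ℙ K (Fin 3 → K) | p ∈ m ∧ #{r ∈ S | r ∈ m} = 1}.Subsingleton)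
    (l : ℙ K (Fin 3 → K)) :
    2 * (Nat.card K - 1) < #{p ∈ S | p ∉ l} + (#{p ∈ S | p ∈ l} + 1) / 2 := by
  have := Fintype.ofFinite K
  obtain ⟨A, hAl, hA, hcard⟩ := exists_affine_blocking_card_le hblock htangent l
  have : Nontrivial (ℙ K (Fin 3 → K)) := by
    have := Fintype.ofFinite (ℙ K (Fin 3 → K))
    have horder := ProjectivePlane.one_lt_order (ℙ K (Fin 3 → K)) (ℙ K (Fin 3 → K))
    rw [← Fintype.one_lt_card_iff_nontrivial,
      ProjectivePlane.card_points (ℙ K (Fin 3 → K)) (ℙ K (Fin 3 → K))]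
    exact Nat.lt_add_of_pos_left (by positivity)
  obtain ⟨m, hml⟩ := exists_ne l
  obtain ⟨p, hpA, -⟩ := hA m hml
  have hjamison := card_sub_one_mul_card_sub_one_lt_of_orthogonal_cover ⟨p, hpA⟩ hAl hA
  rw [Fintype.card_fin, ← Nat.card_eq_fintype_card] at hjamison
  exact hjamison.trans_le hcard

open scoped Classical in
theorem card_filter_mem_le_six [Finite K] (hK : 11 ≤ Nat.card K)
    {S : Finset (ℙ K (Fin 3 → K))} (hcard : #S ≤ 2 * Nat.card K + 3)
    (hblock : ∀ m : ℙ K (Fin 3 → K), ∃ p ∈ S, p ∈ m)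
    (htangent : ∀ p ∈ S,
      {m : ℙ K (Fin 3 → K) | p ∈ m ∧ #{r ∈ S | r ∈ m} = 1}.Subsingleton)
    (l : ℙ K (Fin 3 → K)) : #{p ∈ S | p ∈ l} ≤ 6 := by
  have := Fintype.ofFinite (ℙ K (Fin 3 → K))
  have hjamison := two_mul_card_sub_one_lt_card_filter_add hblock htangent l
  have htangents := card_mul_two_mul_order_le_mul_card hblock htangent l
  have hline := card_filter_mem_add_card_filter_mem_and_notMem S l
  have hsplit := card_filter_add_card_filter_not (s := S) (· ∈ l)
  rw [order_eq_card] at htangents hline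
  generalize #{p ∈ S | p ∈ l} = k at *
  generalize #{p | p ∈ l ∧ p ∉ S} = t at *
  by_contra! hk
  have hk9 : k ≤ 9 := by omega
  have hA : #{p ∈ S | p ∉ l} ≤ 2 * t + k + 1 := by omega
  replace htangents := htangents.trans (Nat.mul_le_mul_left (t + 1) hA)
  obtain rfl : t = Nat.card K + 1 - k := by omega
  interval_cases k <;> nlinarith

theorem every_line_at_most_6_general [Finite K] (hK : 11 ≤ Nat.card K)
    {S : Set (ℙ K (Fin 3 → K))} (hcard : S.ncard ≤ 2 * Nat.card K + 3)
    (hblock : ∀ W : Submodule K (Fin 3 → K), Module.finrank K W = 2 → ∃ P ∈ S, P.submodule ≤ W)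
    (htangent : ∀ P ∈ S, {W : Submodule K (Fin 3 → K) | Module.finrank K W = 2 ∧
      P.submodule ≤ W ∧ {Q ∈ S | Q.submodule ≤ W}.ncard = 1}.Subsingleton)
    {W : Submodule K (Fin 3 → K)} (hW : Module.finrank K W = 2) :
    {P ∈ S | P.submodule ≤ W}.ncard ≤ 6 := by
  classical
  obtain ⟨S, rfl⟩ := S.toFinite.exists_finset_coe
  have hsecant (R : ℙ K (Fin 3 → K)) :
      {P ∈ (S : Set (ℙ K (Fin 3 → K))) | P.submodule ≤ polarHyperplane R}.ncard =
        #{P ∈ S | P ∈ R} := by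
    simp only [submodule_le_polarHyperplane, ← ofField.mem_iff, ← Set.ncard_coe_finset, coe_filter,
      mem_coe]
  obtain ⟨R, rfl⟩ := exists_polarHyperplane_eq (by rw [hW, Fintype.card_fin])
  rw [hsecant]
  rw [Set.ncard_coe_finset] at hcard
  refine card_filter_mem_le_six hK hcard (fun m => ?_) (fun P hP m hm m' hm' => ?_) R
  · simpa only [submodule_le_polarHyperplane, mem_coe, ← ofField.mem_iff] using
      hblock _ (finrank_polarHyperplane m)
  · refine polarHyperplane_injective (htangent P hP ?_ ?_)
    · exact ⟨finrank_polarHyperplane m, submodule_le_polarHyperplane.2 hm.1,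
        (hsecant m).trans hm.2⟩
    · exact ⟨finrank_polarHyperplane m', submodule_le_polarHyperplane.2 hm'.1,
        (hsecant m').trans hm'.2⟩

end Desarguesian

theorem every_line_at_most_6 (S : Set PGPoint) (hS : IsBlockingSemioval S) (hcard : S.ncard = 25) (L : PGLine) :
    (secantPts S L).ncard ≤ 6 := by
  obtain ⟨⟨hblock, -⟩, hsemioval⟩ := hS
  refine every_line_at_most_6_general (by simp) (by simp [hcard])
    (fun W hW => hblock ⟨W, hW⟩) (fun P hP W hW W' hW' => ?_) L.2
  exact congrArg Subtype.val <|
    (hsemioval P hP).unique (y₁ := ⟨W, hW.1⟩) (y₂ := ⟨W', hW'.1⟩) hW.2 hW'.2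
end

section
/- The following 26-element set of points of PG(2,11), given by homogeneous coordinates, is a blocking semioval: {(1,1,0), (1,2,0), (1,3,0), (1,4,0), (1,5,0), (1,6,0), (1,7,0), (1,8,0), (1,9,0), (1,10,0), (0,0,1), (1,0,2), (1,0,6), (1,0,7), (1,0,8), (1,0,10), (1,1,3), (1,2,3), (1,3,5), (1,4,4), (1,5,9), (1,6,5), (1,7,1), (1,8,4), (1,9,1), (1,10,9)}. -/
/-- The point of `PG(2,11)` with homogeneous coordinates `(x, y, z)`. -/
def pt (x y z : ZMod 11) (h : ![x, y, z] ≠ 0 := by decide) : PGPoint :=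
  Projectivization.mk (ZMod 11) ![x, y, z] h

/-- The 26-point set from Table 2. -/
def B26 : Set PGPoint :=
  {pt 1 1 0, pt 1 2 0, pt 1 3 0, pt 1 4 0, pt 1 5 0, pt 1 6 0, pt 1 7 0, pt 1 8 0,
   pt 1 9 0, pt 1 10 0, pt 0 0 1, pt 1 0 2, pt 1 0 6, pt 1 0 7, pt 1 0 8, pt 1 0 10,
   pt 1 1 3, pt 1 2 3, pt 1 3 5, pt 1 4 4, pt 1 5 9, pt 1 6 5, pt 1 7 1, pt 1 8 4,
   pt 1 9 1, pt 1 10 9}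

section Hyperplane

variable {K ι : Type*} [Field K] [Fintype ι] [DecidableEq ι]

theorem finrank_ker_dotProductEquiv_add_one {a : ι → K} (ha : a ≠ 0) :
    Module.finrank K (LinearMap.ker (dotProductEquiv K ι a)) + 1 = Fintype.card ι := by
  rw [Module.Dual.finrank_ker_add_one_of_ne_zero (by simpa using ha),
    Module.finrank_fintype_fun_eq_card]

theorem exists_eq_ker_dotProductEquiv {W : Submodule K (ι → K)}
    (hW : Module.finrank K W + 1 = Fintype.card ι) :
    ∃ a : ι → K, a ≠ 0 ∧ W = LinearMap.ker (dotProductEquiv K ι a) := by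
  have hlt : W < ⊤ := by
    refine lt_top_iff_ne_top.2 fun h => ?_
    rw [h, finrank_top, Module.finrank_fintype_fun_eq_card] at hW
    lia
  obtain ⟨φ, hφ, hle⟩ := Submodule.exists_le_ker_of_lt_top W hlt
  obtain ⟨a, rfl⟩ := (dotProductEquiv K ι).surjective φ
  have ha : a ≠ 0 := by simpa using hφ
  have hker := finrank_ker_dotProductEquiv_add_one ha
  exact ⟨a, ha, Submodule.eq_of_le_of_finrank_eq hle (by lia)⟩

end Hyperplane

theorem isTangent_iff_of_mem {S : Set PGPoint} {P : PGPoint} {L : PGLine} (hP : P ∈ S)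
    (hPL : PGmem P L) : IsTangent S L ↔ ∀ Q ∈ S, PGmem Q L → Q = P := by
  rw [IsTangent, IsSecant, Set.ncard_eq_one]
  constructor
  · rintro ⟨R, hR⟩ Q hQ hQL
    have eq_R {T : PGPoint} (hT : T ∈ S) (hTL : PGmem T L) : T = R :=
      hR.subset (show T ∈ secantPts S L from ⟨hT, hTL⟩)
    rw [eq_R hQ hQL, eq_R hP hPL]
  · exact fun h => ⟨P, Set.Subset.antisymm (fun Q hQ => h Q hQ.1 hQ.2)
      (Set.singleton_subset_iff.2 ⟨hP, hPL⟩)⟩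

/-- The line of `PG(2,11)` with equation `a ⬝ᵥ v = 0`. -/
def lineOfNormal (a : Fin 3 → ZMod 11) (ha : a ≠ 0) : PGLine :=
  ⟨LinearMap.ker (dotProductEquiv (ZMod 11) (Fin 3) a),
    Nat.succ_injective (finrank_ker_dotProductEquiv_add_one ha)⟩

theorem exists_eq_lineOfNormal (L : PGLine) : ∃ a, ∃ ha : a ≠ 0, L = lineOfNormal a ha := by
  obtain ⟨a, ha, hL⟩ := exists_eq_ker_dotProductEquiv (W := L.val) (by rw [L.2]; rfl)
  exact ⟨a, ha, Subtype.ext hL⟩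

theorem lineOfNormal_eq_of_smul_eq {a b : Fin 3 → ZMod 11} {c : ZMod 11} (ha : a ≠ 0)
    (hb : b ≠ 0) (h : c • b = a) : lineOfNormal a ha = lineOfNormal b hb := by
  subst h
  have hc : c ≠ 0 := (smul_ne_zero_iff.1 ha).1
  exact Subtype.ext (by simp [lineOfNormal, LinearMap.ker_smul, hc])

theorem pgmem_pt_lineOfNormal {x y z : ZMod 11} (h : ![x, y, z] ≠ 0) {a : Fin 3 → ZMod 11}
    (ha : a ≠ 0) : PGmem (pt x y z h) (lineOfNormal a ha) ↔ a 0 * x + a 1 * y + a 2 * z = 0 := by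
  simp [PGmem, pt, lineOfNormal, Projectivization.submodule_mk, dotProduct, Fin.sum_univ_three]

/-- The point `(1, x, y)` of `PG(2,11)`, which is the point `(x, y)` of the affine plane that
remains when the line of points `(0, *, *)` is taken as the line at infinity. -/
def affinePoint (P : ZMod 11 × ZMod 11) : PGPoint := pt 1 P.1 P.2 (by simp)

/-- The point at infinity of the affine lines of slope `m`. -/
def slopePoint (m : ZMod 11) : PGPoint := pt 0 1 m (by simp)

/-- The point at infinity of the vertical affine lines. -/
def verticalPoint : PGPoint := pt 0 0 1

/-- The line consisting of `verticalPoint` and of every `slopePoint m`. -/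
def lineAtInfinity : PGLine := lineOfNormal ![1, 0, 0] (by simp)

/-- The projective closure of the affine line `{(c, y)}`. -/
def verticalLine (c : ZMod 11) : PGLine := lineOfNormal ![-c, 1, 0] (by simp)

/-- The projective closure of the affine line `y = m * x + b`. -/
def slopeLine (m b : ZMod 11) : PGLine := lineOfNormal ![b, m, -1] (by simp)

section Incidence

variable (P : ZMod 11 × ZMod 11) (m b c : ZMod 11)

theorem affinePoint_injective : Function.Injective affinePoint := by
  rintro P Q h
  obtain ⟨c, hc⟩ := (Projectivization.mk_eq_mk_iff' _ _ _ _ _).1 h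
  simp only [Matrix.smul_cons, smul_eq_mul, Matrix.smul_empty, Matrix.vecCons_inj, mul_one] at hc
  obtain ⟨rfl, hx, hy, -⟩ := hc
  exact Prod.ext (by simpa using hx.symm) (by simpa using hy.symm)

theorem affinePoint_ne_verticalPoint : affinePoint P ≠ verticalPoint := by
  intro h
  obtain ⟨c, hc⟩ := (Projectivization.mk_eq_mk_iff' _ _ _ _ _).1 h
  simp at hc

theorem not_pgmem_affinePoint_lineAtInfinity : ¬ PGmem (affinePoint P) lineAtInfinity := by
  simp [affinePoint, lineAtInfinity, pgmem_pt_lineOfNormal]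

theorem pgmem_affinePoint_verticalLine : PGmem (affinePoint P) (verticalLine c) ↔ P.1 = c := by
  simp [affinePoint, verticalLine, pgmem_pt_lineOfNormal, neg_add_eq_zero, eq_comm]

theorem pgmem_affinePoint_slopeLine :
    PGmem (affinePoint P) (slopeLine m b) ↔ P.2 = m * P.1 + b := by
  simp [affinePoint, slopeLine, pgmem_pt_lineOfNormal, ← sub_eq_add_neg, sub_eq_zero, add_comm,
    eq_comm]

theorem pgmem_slopePoint_lineAtInfinity : PGmem (slopePoint m) lineAtInfinity := by
  simp [slopePoint, lineAtInfinity, pgmem_pt_lineOfNormal]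

theorem pgmem_slopePoint_slopeLine : PGmem (slopePoint m) (slopeLine m b) := by
  simp [slopePoint, slopeLine, pgmem_pt_lineOfNormal]

theorem pgmem_verticalPoint_lineAtInfinity : PGmem verticalPoint lineAtInfinity := by
  simp [verticalPoint, lineAtInfinity, pgmem_pt_lineOfNormal]

theorem pgmem_verticalPoint_verticalLine : PGmem verticalPoint (verticalLine c) := by
  simp [verticalPoint, verticalLine, pgmem_pt_lineOfNormal]

theorem not_pgmem_verticalPoint_slopeLine : ¬ PGmem verticalPoint (slopeLine m b) := by
  simp [verticalPoint, slopeLine, pgmem_pt_lineOfNormal]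

end Incidence

theorem slopePoint_ne_affinePoint (m : ZMod 11) (P : ZMod 11 × ZMod 11) :
    slopePoint m ≠ affinePoint P := fun h =>
  not_pgmem_affinePoint_lineAtInfinity P (h ▸ pgmem_slopePoint_lineAtInfinity m)

theorem slopePoint_ne_verticalPoint (m : ZMod 11) : slopePoint m ≠ verticalPoint := fun h =>
  not_pgmem_verticalPoint_slopeLine m 0 (h ▸ pgmem_slopePoint_slopeLine m 0)

theorem eq_lineAtInfinity_or_verticalLine_or_slopeLine (L : PGLine) :
    L = lineAtInfinity ∨ (∃ c, L = verticalLine c) ∨ ∃ m b, L = slopeLine m b := by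
  obtain ⟨a, ha, rfl⟩ := exists_eq_lineOfNormal L
  by_cases h2 : a 2 = 0
  · by_cases h1 : a 1 = 0
    · left
      apply lineOfNormal_eq_of_smul_eq (c := a 0)
      ext i; fin_cases i <;> simp [h1, h2]
    · refine Or.inr (Or.inl ⟨-(a 0 / a 1), lineOfNormal_eq_of_smul_eq (c := a 1) _ _ ?_⟩)
      ext i; fin_cases i <;> simp [h2, mul_div_cancel₀, h1]
  · refine Or.inr (Or.inr ⟨-(a 1 / a 2), -(a 0 / a 2),
      lineOfNormal_eq_of_smul_eq (c := -a 2) _ _ ?_⟩)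
    ext i; fin_cases i <;> simp [mul_div_cancel₀, h2]

section AffinePlane

variable {K : Type*} [Field K]

/-- The affine line of slope `m` through `P` meets the point set `A` at most in `P`. -/
def IsTangentSlope (A : Set (K × K)) (P : K × K) (m : K) : Prop :=
  ∀ Q ∈ A, Q.2 = m * (Q.1 - P.1) + P.2 → Q = P

/-- The conditions on a set `A` of points of the affine plane over `K` that make `A`, together with
the point at infinity of the vertical lines, a blocking semioval of the projective plane. Vertical
lines are treated separately because they all pass through the added point. -/
structure IsAffineBlockingSemioval (A : Set (K × K)) : Prop where
  vertical_inter_nonempty : ∀ x, ∃ y, (x, y) ∈ A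
  not_vertical_subset : ∀ x, ∃ y, (x, y) ∉ A
  slope_inter_nonempty : ∀ m b, ∃ P ∈ A, P.2 = m * P.1 + b
  existsUnique_isTangentSlope : ∀ P ∈ A, ∃! m, IsTangentSlope A P m

end AffinePlane

/-- The union of an affine point set with the point at infinity of the vertical lines. -/
def verticalCompletion (A : Set (ZMod 11 × ZMod 11)) : Set PGPoint :=
  insert verticalPoint (affinePoint '' A)

section VerticalCompletion

variable {A : Set (ZMod 11 × ZMod 11)}

theorem verticalPoint_mem_verticalCompletion : verticalPoint ∈ verticalCompletion A :=
  Set.mem_insert _ _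

theorem affinePoint_mem_verticalCompletion {P : ZMod 11 × ZMod 11} :
    affinePoint P ∈ verticalCompletion A ↔ P ∈ A := by
  simp [verticalCompletion, affinePoint_ne_verticalPoint, affinePoint_injective.eq_iff]

theorem forall_mem_verticalCompletion {p : PGPoint → Prop} :
    (∀ P ∈ verticalCompletion A, p P) ↔ p verticalPoint ∧ ∀ P ∈ A, p (affinePoint P) := by
  rw [verticalCompletion, Set.forall_mem_insert, Set.forall_mem_image]

theorem slopePoint_notMem_verticalCompletion (m : ZMod 11) :
    slopePoint m ∉ verticalCompletion A := by
  rintro (h | ⟨P, -, h⟩)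
  · exact slopePoint_ne_verticalPoint m h
  · exact slopePoint_ne_affinePoint m P h.symm

theorem ncard_verticalCompletion (A : Set (ZMod 11 × ZMod 11)) :
    (verticalCompletion A).ncard = A.ncard + 1 := by
  have hV : verticalPoint ∉ affinePoint '' A := by
    rintro ⟨P, -, h⟩
    exact affinePoint_ne_verticalPoint P h
  rw [verticalCompletion, Set.ncard_insert_of_notMem hV,
    Set.ncard_image_of_injective A affinePoint_injective]

theorem isTangent_lineAtInfinity : IsTangent (verticalCompletion A) lineAtInfinity := by
  rw [isTangent_iff_of_mem verticalPoint_mem_verticalCompletion pgmem_verticalPoint_lineAtInfinity]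
  exact forall_mem_verticalCompletion.2
    ⟨fun _ => rfl, fun P _ hL => absurd hL (not_pgmem_affinePoint_lineAtInfinity P)⟩

theorem not_isTangent_verticalLine {c y : ZMod 11} (hcy : (c, y) ∈ A) :
    ¬ IsTangent (verticalCompletion A) (verticalLine c) := by
  rw [isTangent_iff_of_mem verticalPoint_mem_verticalCompletion
    (pgmem_verticalPoint_verticalLine c)]
  exact fun h => affinePoint_ne_verticalPoint (c, y)
    (h _ (affinePoint_mem_verticalCompletion.2 hcy)
      ((pgmem_affinePoint_verticalLine (c, y) c).2 rfl))

theorem isTangent_slopeLine_iff {P : ZMod 11 × ZMod 11} (hP : P ∈ A) {m b : ZMod 11}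
    (hPL : P.2 = m * P.1 + b) :
    IsTangent (verticalCompletion A) (slopeLine m b) ↔ IsTangentSlope A P m := by
  rw [isTangent_iff_of_mem (affinePoint_mem_verticalCompletion.2 hP)
    ((pgmem_affinePoint_slopeLine P m b).2 hPL)]
  have hline (Q : ZMod 11 × ZMod 11) :
      PGmem (affinePoint Q) (slopeLine m b) ↔ Q.2 = m * (Q.1 - P.1) + P.2 := by
    rw [pgmem_affinePoint_slopeLine, hPL]
    ring_nf
  simp only [forall_mem_verticalCompletion, hline, not_pgmem_verticalPoint_slopeLine,
    affinePoint_injective.eq_iff, false_imp_iff, true_and, IsTangentSlope]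

theorem IsAffineBlockingSemioval.isBlockingSet_verticalCompletion
    (hA : IsAffineBlockingSemioval A) : IsBlockingSet (verticalCompletion A) := by
  constructor <;> intro L <;>
    obtain rfl | ⟨c, rfl⟩ | ⟨m, b, rfl⟩ := eq_lineAtInfinity_or_verticalLine_or_slopeLine L
  · exact ⟨_, verticalPoint_mem_verticalCompletion, pgmem_verticalPoint_lineAtInfinity⟩
  · exact ⟨_, verticalPoint_mem_verticalCompletion, pgmem_verticalPoint_verticalLine c⟩
  · obtain ⟨P, hP, hPL⟩ := hA.slope_inter_nonempty m b
    exact ⟨_, affinePoint_mem_verticalCompletion.2 hP, (pgmem_affinePoint_slopeLine P m b).2 hPL⟩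
  · exact fun h => slopePoint_notMem_verticalCompletion 0 (h (pgmem_slopePoint_lineAtInfinity 0))
  · obtain ⟨y, hy⟩ := hA.not_vertical_subset c
    exact fun h => hy (affinePoint_mem_verticalCompletion.1
      (h ((pgmem_affinePoint_verticalLine (c, y) c).2 rfl)))
  · exact fun h => slopePoint_notMem_verticalCompletion m (h (pgmem_slopePoint_slopeLine m b))

theorem IsAffineBlockingSemioval.existsUnique_isTangent_verticalPoint
    (hA : IsAffineBlockingSemioval A) :
    ∃! L, PGmem verticalPoint L ∧ IsTangent (verticalCompletion A) L := by
  refine ⟨lineAtInfinity, ⟨pgmem_verticalPoint_lineAtInfinity, isTangent_lineAtInfinity⟩, ?_⟩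
  rintro L ⟨hVL, hL⟩
  obtain rfl | ⟨c, rfl⟩ | ⟨m, b, rfl⟩ := eq_lineAtInfinity_or_verticalLine_or_slopeLine L
  · rfl
  · obtain ⟨y, hy⟩ := hA.vertical_inter_nonempty c
    exact absurd hL (not_isTangent_verticalLine hy)
  · exact absurd hVL (not_pgmem_verticalPoint_slopeLine m b)

theorem IsAffineBlockingSemioval.existsUnique_isTangent_affinePoint
    (hA : IsAffineBlockingSemioval A) {P : ZMod 11 × ZMod 11} (hP : P ∈ A) :
    ∃! L, PGmem (affinePoint P) L ∧ IsTangent (verticalCompletion A) L := by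
  obtain ⟨m, hm, hm_unique⟩ := hA.existsUnique_isTangentSlope P hP
  have hPL : P.2 = m * P.1 + (P.2 - m * P.1) := by ring
  refine ⟨slopeLine m (P.2 - m * P.1),
    ⟨(pgmem_affinePoint_slopeLine P _ _).2 hPL, (isTangent_slopeLine_iff hP hPL).2 hm⟩, ?_⟩
  rintro L ⟨hPL', hL⟩
  obtain rfl | ⟨c, rfl⟩ | ⟨m', b', rfl⟩ := eq_lineAtInfinity_or_verticalLine_or_slopeLine L
  · exact absurd hPL' (not_pgmem_affinePoint_lineAtInfinity P)
  · obtain rfl := (pgmem_affinePoint_verticalLine P c).1 hPL'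
    exact absurd hL (not_isTangent_verticalLine hP)
  · rw [pgmem_affinePoint_slopeLine] at hPL'
    obtain rfl := hm_unique m' ((isTangent_slopeLine_iff hP hPL').1 hL)
    rw [hPL', add_sub_cancel_left]

theorem IsAffineBlockingSemioval.isBlockingSemioval_verticalCompletion
    (hA : IsAffineBlockingSemioval A) : IsBlockingSemioval (verticalCompletion A) :=
  ⟨hA.isBlockingSet_verticalCompletion, forall_mem_verticalCompletion.2
    ⟨hA.existsUnique_isTangent_verticalPoint, fun _ => hA.existsUnique_isTangent_affinePoint⟩⟩

end VerticalCompletion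

section AxisGraphSet

variable {K : Type*} [Field K] {f : K → K} {N : Set K} {c m x : K}

/-- The affine point set that meets the `y`-axis in `{0} × N` and each other vertical line in its
points on the `x`-axis and on the graph of `f`. -/
def axisGraphSet (f : K → K) (N : Set K) : Set (K × K) :=
  {P | P.1 = 0 ∧ P.2 ∈ N ∨ P.1 ≠ 0 ∧ (P.2 = 0 ∨ P.2 = f P.1)}

theorem mk_zero_mem_axisGraphSet {y : K} : (0, y) ∈ axisGraphSet f N ↔ y ∈ N := by
  simp [axisGraphSet]

theorem mk_mem_axisGraphSet {x y : K} (hx : x ≠ 0) :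
    (x, y) ∈ axisGraphSet f N ↔ y = 0 ∨ y = f x := by
  simp [axisGraphSet, hx]

theorem forall_mem_axisGraphSet {p : K × K → Prop} :
    (∀ P ∈ axisGraphSet f N, p P) ↔
      (∀ y ∈ N, p (0, y)) ∧ (∀ x ≠ 0, p (x, 0)) ∧ ∀ x ≠ 0, p (x, f x) := by
  constructor
  · exact fun h => ⟨fun y hy => h _ (mk_zero_mem_axisGraphSet.2 hy),
      fun x hx => h _ ((mk_mem_axisGraphSet hx).2 (Or.inl rfl)),
      fun x hx => h _ ((mk_mem_axisGraphSet hx).2 (Or.inr rfl))⟩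
  · rintro ⟨hN, haxis, hgraph⟩ ⟨x, y⟩ (⟨hx : x = 0, hy⟩ | ⟨hx, (hy : y = 0) | (hy : y = f x)⟩)
    · exact hx ▸ hN y hy
    · exact hy ▸ haxis x hx
    · exact hy ▸ hgraph x hx

theorem axisGraphSet_slope_inter_nonempty
    (hsecant : ∀ c ∉ N, c ≠ 0 → ∃ x ≠ 0, ∃ x' ≠ 0, x ≠ x' ∧ f x = c ∧ f x' = c)
    (hquot : ∀ m ≠ 0, ∃! x, x ≠ 0 ∧ f x = m * x) (m b : K) :
    ∃ P ∈ axisGraphSet f N, P.2 = m * P.1 + b := by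
  by_cases hm : m = 0 <;> by_cases hb : b = 0
  · exact ⟨(1, 0), (mk_mem_axisGraphSet one_ne_zero).2 (Or.inl rfl), by simp [hm, hb]⟩
  · by_cases hbN : b ∈ N
    · exact ⟨(0, b), mk_zero_mem_axisGraphSet.2 hbN, by simp⟩
    · obtain ⟨x, hx, -, -, -, hfx, -⟩ := hsecant b hbN hb
      exact ⟨(x, b), (mk_mem_axisGraphSet hx).2 (Or.inr hfx.symm), by simp [hm]⟩
  · obtain ⟨x, ⟨hx, hfx⟩, -⟩ := hquot m hm
    exact ⟨(x, f x), (mk_mem_axisGraphSet hx).2 (Or.inr rfl), by simp [hfx, hb]⟩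
  · have hx : -b / m ≠ 0 := div_ne_zero (neg_ne_zero.2 hb) hm
    exact ⟨(-b / m, 0), (mk_mem_axisGraphSet hx).2 (Or.inl rfl), by simp [mul_div_cancel₀, hm]⟩

theorem IsTangentSlope.eq_mul {P : K × K} (h : IsTangentSlope (axisGraphSet f N) P m)
    (hm : m ≠ 0) (hP : P.2 ≠ 0) : P.2 = m * P.1 := by
  by_contra hne
  -- Otherwise the line also meets the set in a point of the `x`-axis.
  have hx : P.1 - P.2 / m ≠ 0 := fun h0 => hne (by rw [sub_eq_zero.1 h0, mul_div_cancel₀ _ hm])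
  have hQ : (P.1 - P.2 / m, 0) = P :=
    h _ ((mk_mem_axisGraphSet hx).2 (Or.inl rfl)) (by simp [mul_div_cancel₀, hm])
  exact hP (congrArg Prod.snd hQ).symm

theorem isTangentSlope_axisGraphSet_mk_zero_iff (h0 : 0 ∉ N) (hvalues : ∀ x ≠ 0, f x ∉ N)
    (hc : c ∈ N) : IsTangentSlope (axisGraphSet f N) (0, c) m ↔ m = 0 := by
  have hc0 : c ≠ 0 := ne_of_mem_of_not_mem hc h0
  constructor
  · intro h
    by_contra hm
    exact hc0 (by simpa using h.eq_mul hm hc0)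
  · rintro rfl
    refine forall_mem_axisGraphSet.2 ⟨fun y _ hy => ?_, fun x _ hy => ?_, fun x hx hy => ?_⟩
    · simpa using hy
    · exact absurd (by simpa using hy) hc0.symm
    · have hfx : f x = c := by simpa using hy
      exact absurd (hfx ▸ hc) (hvalues x hx)

theorem isTangentSlope_axisGraphSet_axis_iff (hx : x ≠ 0) (hfx : f x ≠ 0)
    (hk : ∃ k, k ≠ 0 ∧ k ≠ x) : IsTangentSlope (axisGraphSet f N) (x, 0) m ↔
      m ≠ 0 ∧ -(m * x) ∉ N ∧ ∀ k ≠ 0, f k ≠ m * (k - x) := by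
  rw [IsTangentSlope, forall_mem_axisGraphSet]
  constructor
  · rintro ⟨hN, haxis, hgraph⟩
    refine ⟨?_, fun hmx => ?_, fun k hk hfk => ?_⟩
    · rintro rfl
      obtain ⟨k, hk0, hkx⟩ := hk
      exact hkx (congrArg Prod.fst (haxis k hk0 (by simp)))
    · exact hx (congrArg Prod.fst (hN _ hmx (by simp))).symm
    · obtain ⟨rfl, hf0⟩ := Prod.mk_inj.1 (hgraph k hk (by simpa using hfk))
      exact hfx hf0
  · rintro ⟨hm, hmx, hgraph⟩
    refine ⟨fun y hy hline => ?_, fun k _ hline => ?_, fun k hk hline => ?_⟩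
    · have hy' : y = -(m * x) := by simpa using hline
      exact absurd (hy' ▸ hy) hmx
    · have hkx : k - x = 0 := by simpa [hm] using hline
      rw [sub_eq_zero.1 hkx]
    · exact absurd (by simpa using hline) (hgraph k hk)

theorem isTangentSlope_axisGraphSet_graph_iff (h0 : 0 ∉ N) (hx : x ≠ 0) (hfx : f x ≠ 0)
    (hk : ∃ k ≠ 0, k ≠ x ∧ f k = f x) (hquot : ∀ m ≠ 0, ∃! x, x ≠ 0 ∧ f x = m * x) :
    IsTangentSlope (axisGraphSet f N) (x, f x) m ↔ m = f x / x := by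
  constructor
  · intro h
    have hm : m ≠ 0 := by
      rintro rfl
      obtain ⟨k, hk0, hkx, hfk⟩ := hk
      exact hkx (congrArg Prod.fst
        (h (k, f k) ((mk_mem_axisGraphSet hk0).2 (Or.inr rfl)) (by simp [hfk])))
    exact (eq_div_iff hx).2 (h.eq_mul hm hfx).symm
  · rintro rfl
    have hline (k : K) : f x / x * (k - x) + f x = f x / x * k := by field_simp; ring
    have hm : f x / x ≠ 0 := div_ne_zero hfx hx
    simp only [IsTangentSlope, hline]
    refine forall_mem_axisGraphSet.2 ⟨fun y hy hyx => ?_, fun k hk hk' => ?_, fun k hk hfk => ?_⟩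
    · have hy0 : y = 0 := by simpa using hyx
      exact absurd (hy0 ▸ hy) h0
    · exact absurd (by simpa [hfx, hx] using hk'.symm) hk
    · obtain rfl : k = x := (hquot _ hm).unique ⟨hk, hfk⟩ ⟨hx, (div_mul_cancel₀ _ hx).symm⟩
      rfl

theorem isAffineBlockingSemioval_axisGraphSet (hN : N.Nonempty) (h0 : 0 ∉ N)
    (hvalues : ∀ x ≠ 0, f x ∉ N)
    (hsecant : ∀ c ∉ N, c ≠ 0 → ∃ x ≠ 0, ∃ x' ≠ 0, x ≠ x' ∧ f x = c ∧ f x' = c)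
    (hquot : ∀ m ≠ 0, ∃! x, x ≠ 0 ∧ f x = m * x)
    (haxis : ∀ x ≠ 0, ∃! m, m ≠ 0 ∧ -(m * x) ∉ N ∧ ∀ k ≠ 0, f k ≠ m * (k - x)) :
    IsAffineBlockingSemioval (axisGraphSet f N) := by
  obtain ⟨n, hn⟩ := hN
  have hn0 : n ≠ 0 := ne_of_mem_of_not_mem hn h0
  have f_ne_zero (x : K) (hx : x ≠ 0) : f x ≠ 0 := by
    obtain ⟨m, ⟨-, -, hm⟩, -⟩ := haxis x hx
    simpa using hm x hx
  have exists_twin (x : K) (hx : x ≠ 0) : ∃ k ≠ 0, k ≠ x ∧ f k = f x := by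
    obtain ⟨k, hk, k', hk', hne, hfk, hfk'⟩ := hsecant (f x) (hvalues x hx) (f_ne_zero x hx)
    by_cases hkx : k = x
    · exact ⟨k', hk', hkx ▸ hne.symm, hfk'⟩
    · exact ⟨k, hk, hkx, hfk⟩
  refine ⟨fun x => ?_, fun x => ?_, axisGraphSet_slope_inter_nonempty hsecant hquot,
    forall_mem_axisGraphSet.2 ⟨fun c hc => ?_, fun x hx => ?_, fun x hx => ?_⟩⟩
  · by_cases hx : x = 0
    · exact ⟨n, hx ▸ mk_zero_mem_axisGraphSet.2 hn⟩
    · exact ⟨0, (mk_mem_axisGraphSet hx).2 (Or.inl rfl)⟩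
  · by_cases hx : x = 0
    · exact ⟨0, by rwa [hx, mk_zero_mem_axisGraphSet]⟩
    · exact ⟨n, by simp [mk_mem_axisGraphSet hx, hn0, ne_of_mem_of_not_mem hn (hvalues x hx)]⟩
  · simp only [isTangentSlope_axisGraphSet_mk_zero_iff h0 hvalues hc, existsUnique_eq]
  · obtain ⟨k, hk, hkx, -⟩ := exists_twin x hx
    simpa only [isTangentSlope_axisGraphSet_axis_iff hx (f_ne_zero x hx) ⟨k, hk, hkx⟩]
      using haxis x hx
  · simp only [isTangentSlope_axisGraphSet_graph_iff h0 hx (f_ne_zero x hx) (exists_twin x hx)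
      hquot, existsUnique_eq]

end AxisGraphSet

section HalfParabolas

variable {K : Type*} [Field K] {a b c m x : K}

theorem isSquare_div_iff_of_isSquare (ha : IsSquare a) (ha0 : a ≠ 0) :
    IsSquare (m / a) ↔ IsSquare m :=
  ⟨fun h => by simpa [ha0] using h.mul ha, fun h => h.div ha⟩

theorem exists_isSquare_mul_sq_eq (hneg : ∀ r : K, r ≠ 0 → (IsSquare (-r) ↔ ¬ IsSquare r))
    (ha : IsSquare a) (ha0 : a ≠ 0) (hc : IsSquare c) (hc0 : c ≠ 0) :
    ∃ r, r ≠ 0 ∧ IsSquare r ∧ a * r ^ 2 = c := by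
  obtain ⟨r, hr⟩ := (isSquare_iff_exists_sq _).1 (hc.div ha)
  have hr0 : r ≠ 0 := by
    rintro rfl
    simp [hc0, ha0] at hr
  have har : a * r ^ 2 = c := by rw [← hr, mul_div_cancel₀ c ha0]
  by_cases hsq : IsSquare r
  · exact ⟨r, hr0, hsq, har⟩
  · exact ⟨-r, neg_ne_zero.2 hr0, (hneg r hr0).2 hsq, by rwa [neg_sq]⟩

variable [DecidablePred (IsSquare : K → Prop)]

/-- The function whose graph follows the parabola `y = a * x ^ 2` over the squares and the parabola
`y = b * x ^ 2` over the nonsquares. -/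
def halfParabolas (a b x : K) : K := if IsSquare x then a * x ^ 2 else b * x ^ 2

theorem isSquare_halfParabolas (ha : IsSquare a) (hb : IsSquare b) (x : K) :
    IsSquare (halfParabolas a b x) := by
  rw [halfParabolas]
  split_ifs
  exacts [ha.mul (IsSquare.sq x), hb.mul (IsSquare.sq x)]

theorem halfParabolas_eq_mul_iff (ha : IsSquare a) (ha0 : a ≠ 0) (hb : IsSquare b) (hb0 : b ≠ 0)
    (hx : x ≠ 0) : halfParabolas a b x = m * x ↔ x = if IsSquare m then m / a else m / b := by
  have parabola_iff {d : K} (hd : d ≠ 0) : d * x ^ 2 = m * x ↔ x = m / d := by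
    rw [pow_two, ← mul_assoc, mul_left_inj' hx, eq_div_iff hd, mul_comm]
  have isSquare_iff {d : K} (hd : IsSquare d) (hd0 : d ≠ 0) (h : x = m / d) :
      IsSquare x ↔ IsSquare m := h ▸ isSquare_div_iff_of_isSquare hd hd0
  rw [halfParabolas]
  split_ifs with hxsq hmsq hmsq
  · exact parabola_iff ha0
  · rw [parabola_iff ha0]
    exact iff_of_false (fun h => hmsq ((isSquare_iff ha ha0 h).1 hxsq))
      (fun h => hmsq ((isSquare_iff hb hb0 h).1 hxsq))
  · rw [parabola_iff hb0]
    exact iff_of_false (fun h => hxsq ((isSquare_iff hb hb0 h).2 hmsq))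
      (fun h => hxsq ((isSquare_iff ha ha0 h).2 hmsq))
  · exact parabola_iff hb0

theorem existsUnique_halfParabolas_eq_mul (ha : IsSquare a) (ha0 : a ≠ 0) (hb : IsSquare b)
    (hb0 : b ≠ 0) (hm : m ≠ 0) : ∃! x, x ≠ 0 ∧ halfParabolas a b x = m * x := by
  have hroot : (if IsSquare m then m / a else m / b) ≠ 0 := by
    split_ifs
    exacts [div_ne_zero hm ha0, div_ne_zero hm hb0]
  exact ⟨_, ⟨hroot, (halfParabolas_eq_mul_iff ha ha0 hb hb0 hroot).2 rfl⟩,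
    fun x ⟨hx, hfx⟩ => (halfParabolas_eq_mul_iff ha ha0 hb hb0 hx).1 hfx⟩

theorem exists_ne_halfParabolas_eq (hneg : ∀ r : K, r ≠ 0 → (IsSquare (-r) ↔ ¬ IsSquare r))
    (ha : IsSquare a) (ha0 : a ≠ 0) (hb : IsSquare b) (hb0 : b ≠ 0) (hc : IsSquare c)
    (hc0 : c ≠ 0) : ∃ x ≠ 0, ∃ x' ≠ 0,
      x ≠ x' ∧ halfParabolas a b x = c ∧ halfParabolas a b x' = c := by
  obtain ⟨r, hr0, hr, har⟩ := exists_isSquare_mul_sq_eq hneg ha ha0 hc hc0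
  obtain ⟨s, hs0, hs, hbs⟩ := exists_isSquare_mul_sq_eq hneg hb hb0 hc hc0
  have hs' : ¬ IsSquare (-s) := fun h => (hneg s hs0).1 h hs
  exact ⟨r, hr0, -s, neg_ne_zero.2 hs0, fun h => hs' (h ▸ hr),
    by rw [halfParabolas, if_pos hr, har],
    by rw [halfParabolas, if_neg hs', neg_sq, hbs]⟩

theorem isAffineBlockingSemioval_halfParabolas
    (hneg : ∀ r : K, r ≠ 0 → (IsSquare (-r) ↔ ¬ IsSquare r))
    (ha : IsSquare a) (ha0 : a ≠ 0) (hb : IsSquare b) (hb0 : b ≠ 0)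
    (haxis : ∀ x : K, x ≠ 0 → ∃! m : K, m ≠ 0 ∧ IsSquare (-(m * x)) ∧
      ∀ k ≠ 0, halfParabolas a b k ≠ m * (k - x)) :
    IsAffineBlockingSemioval (axisGraphSet (halfParabolas a b) {c | ¬ IsSquare c}) := by
  apply isAffineBlockingSemioval_axisGraphSet
  · exact ⟨-1, fun h => (hneg 1 one_ne_zero).1 h IsSquare.one⟩
  · exact fun h => h IsSquare.zero
  · exact fun x _ h => h (isSquare_halfParabolas ha hb x)
  · exact fun c hc => exists_ne_halfParabolas_eq hneg ha ha0 hb hb0 (not_not.1 hc)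
  · exact fun m => existsUnique_halfParabolas_eq_mul ha ha0 hb hb0
  · simpa only [Set.mem_ofPred_eq, not_not] using haxis

end HalfParabolas

/-- The affine points `(x, y)` for which `pt 1 x y` is listed in `B26`. -/
def B26Affine : Finset (ZMod 11 × ZMod 11) :=
  {(1, 0), (2, 0), (3, 0), (4, 0), (5, 0), (6, 0), (7, 0), (8, 0), (9, 0), (10, 0),
   (0, 2), (0, 6), (0, 7), (0, 8), (0, 10),
   (1, 3), (2, 3), (3, 5), (4, 4), (5, 9), (6, 5), (7, 1), (8, 4), (9, 1), (10, 9)}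

theorem B26_eq_verticalCompletion : B26 = verticalCompletion B26Affine := by
  ext P
  simp only [B26, verticalCompletion, B26Affine, Finset.coe_insert, Finset.coe_singleton,
    Set.image_insert_eq, Set.image_singleton, Set.mem_insert_iff, Set.mem_singleton_iff,
    affinePoint, verticalPoint]
  grind

theorem coe_B26Affine : (B26Affine : Set (ZMod 11 × ZMod 11)) =
    axisGraphSet (halfParabolas 3 9) {c | ¬ IsSquare c} := by
  have h : ∀ P, P ∈ B26Affine ↔ P.1 = 0 ∧ ¬ IsSquare P.2 ∨
      P.1 ≠ 0 ∧ (P.2 = 0 ∨ P.2 = halfParabolas 3 9 P.1) := by decide +kernel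
  exact Set.ext h

theorem existsUnique_slope_forall_halfParabolas_ne : ∀ x : ZMod 11, x ≠ 0 → ∃! m : ZMod 11,
    m ≠ 0 ∧ IsSquare (-(m * x)) ∧ ∀ k ≠ 0, halfParabolas 3 9 k ≠ m * (k - x) := by
  unfold ExistsUnique
  decide +kernel

theorem isAffineBlockingSemioval_B26Affine :
    IsAffineBlockingSemioval (B26Affine : Set (ZMod 11 × ZMod 11)) := by
  have hneg : ∀ r : ZMod 11, r ≠ 0 → (IsSquare (-r) ↔ ¬ IsSquare r) := by decide +kernel
  have h3 : IsSquare (3 : ZMod 11) := ⟨5, by decide⟩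
  have h9 : IsSquare (9 : ZMod 11) := ⟨3, by decide⟩
  rw [coe_B26Affine]
  exact isAffineBlockingSemioval_halfParabolas hneg h3 (by decide) h9 (by decide)
    existsUnique_slope_forall_halfParabolas_ne

theorem B26_is_26_point_blocking_semioval :
    B26.ncard = 26 ∧ IsBlockingSemioval B26 := by
  have hcard : (B26Affine : Set (ZMod 11 × ZMod 11)).ncard = 25 := by
    rw [Set.ncard_coe_finset]
    decide
  rw [B26_eq_verticalCompletion, ncard_verticalCompletion, hcard]
  exact ⟨rfl, isAffineBlockingSemioval_B26Affine.isBlockingSemioval_verticalCompletion⟩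
end
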